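/- Let H be the subgroup of PGL(3, ℤ/4ℤ) consisting of the classes of all matrices congruent to the identity matrix modulo 2 (i.e. H = (I + 2·M₃(ℤ/4ℤ)) / {±I}). Then H is a normal subgroup of PGL(3, ℤ/4ℤ) of order 256, and H acts simply transitively (regularly) on the set of hyperovals of PHG(2, ℤ/4ℤ). -/

import Mathlib

/-- A point of a projective Hjelmslev geometry PHG(n-1, R): a free rank-1 submodule
of Rⁿ, i.e. the R-span of a vector having at least one unit coordinate. -/
def IsPoint {R : Type} [CommRing R] {n : ℕ} (P : Submodule R (Fin n → R)) : Prop :=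
  ∃ v : Fin n → R, (∃ i, IsUnit (v i)) ∧ P = Submodule.span R {v}

/-- A free rank-k submodule of Rⁿ: a submodule linearly isomorphic to Rᵏ. -/
def IsFreeRank {R : Type} [CommRing R] {n : ℕ} (k : ℕ) (L : Submodule R (Fin n → R)) : Prop :=
  Nonempty ((Fin k → R) ≃ₗ[R] L)

/-- A line of PHG(2, R): a free rank-2 submodule of R³. -/
abbrev IsLine {R : Type} [CommRing R] (L : Submodule R (Fin 3 → R)) : Prop := IsFreeRank 2 L

/-- A hyperoval of PHG(2, R), |R| = 4: a set of 7 points with at most 2 points on each line. -/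
def IsHyperoval {R : Type} [CommRing R] (H : Set (Submodule R (Fin 3 → R))) : Prop :=
  (∀ P ∈ H, IsPoint P) ∧ H.ncard = 7 ∧ ∀ L, IsLine L → {P ∈ H | P ≤ L}.ncard ≤ 2

abbrev R4 := ZMod 4

abbrev GL3 := GL (Fin 3) R4

/-- The subgroup {I, -I} of scalar matrices of GL(3, ℤ/4ℤ)
(the units of ℤ/4ℤ are ±1). -/
def pmOne : Subgroup GL3 where
  carrier := {1, -1}
  one_mem' := Or.inl rfl
  mul_mem' := by rintro a b (rfl | rfl) (rfl | rfl) <;> simp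
  inv_mem' := by rintro a (rfl | rfl) <;> simp

instance : pmOne.Normal := by
  constructor
  rintro n (rfl | rfl) g
  · simpa using pmOne.one_mem
  · right
    simp [mul_neg, neg_mul, Set.mem_singleton_iff]

/-- PGL(3, ℤ/4ℤ): GL(3, ℤ/4ℤ) modulo its subgroup of scalar matrices {I, -I}. -/
abbrev PGL3 := GL3 ⧸ pmOne

/-- A matrix maps a point (the span of a vector) to the span of the image vector;
equivalently, it maps a submodule to its image. -/
def mapPt (g : GL3) (P : Submodule R4 (Fin 3 → R4)) : Submodule R4 (Fin 3 → R4) :=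
  P.map (Matrix.mulVecLin (g : Matrix (Fin 3) (Fin 3) R4))

lemma mapPt_neg (h : GL3) (P : Submodule R4 (Fin 3 → R4)) : mapPt (-h) P = mapPt h P := by
  unfold mapPt
  have : Matrix.mulVecLin ((-h : GL3) : Matrix (Fin 3) (Fin 3) R4)
      = -Matrix.mulVecLin ((h : GL3) : Matrix (Fin 3) (Fin 3) R4) := by
    ext v i
    simp [Matrix.neg_mulVec]
  rw [this, Submodule.map_neg]

/-- The induced action of PGL(3, ℤ/4ℤ) on points of PHG(2, ℤ/4ℤ). -/
def pglMapPt (g : PGL3) (P : Submodule R4 (Fin 3 → R4)) : Submodule R4 (Fin 3 → R4) :=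
  Quotient.liftOn' g (fun h => mapPt h P) (by
    intro a b hab
    rw [QuotientGroup.leftRel_apply] at hab
    rcases hab with h1 | h1
    · have hb : b = a := by
        have h2 := mul_inv_cancel_left a b
        rw [h1, mul_one] at h2
        exact h2.symm
      rw [hb]
    · rw [Set.mem_singleton_iff] at h1
      have hb : b = -a := by
        have h2 := mul_inv_cancel_left a b
        rw [h1, mul_neg, mul_one] at h2
        exact h2.symm
      rw [hb]
      exact (mapPt_neg a P).symm)

/-- The induced action of PGL(3, ℤ/4ℤ) on sets of points. -/
def pglMapSet (g : PGL3) (H : Set (Submodule R4 (Fin 3 → R4))) : Set (Submodule R4 (Fin 3 → R4)) :=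
  pglMapPt g '' H

/-- Reduction mod 2 on ℤ/4ℤ. -/
def red2 : ZMod 4 →+* ZMod 2 := ZMod.castHom (show (2:ℕ) ∣ 4 by norm_num) (ZMod 2)

/-- Reduction mod 2 on GL(3, ℤ/4ℤ). -/
def redGL : GL3 →* GL (Fin 3) (ZMod 2) :=
  Units.map (RingHom.mapMatrix red2 :
    Matrix (Fin 3) (Fin 3) R4 →+* Matrix (Fin 3) (Fin 3) (ZMod 2)).toMonoidHom

/-- The subgroup H = (I + 2·M₃(ℤ/4ℤ))/{±I} of PGL(3, ℤ/4ℤ): the classes of all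
matrices congruent to the identity matrix modulo 2. -/
def Hsub : Subgroup PGL3 := (MonoidHom.ker redGL).map (QuotientGroup.mk' pmOne)

/-! Call two points neighbours if they agree modulo 2; there are seven neighbour classes, the points
of the Fano plane. Each point lies on six lines, and the other six points of a hyperoval lie on
disjoint nonempty sets of them. Two lines join neighbours, so a hyperoval contains no two
neighbours, and hence one point from each class. The points in the classes of the three unit
vectors and of the all-ones vector form the image of the standard frame under some matrix congruent
to the identity modulo 2, and the six lines of the frame leave a single hyperoval through it. This
gives transitivity. A matrix congruent to the identity modulo 2 moves every point to a neighbour,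
so if it preserves a hyperoval then it fixes its points, in particular the points of a frame, and is
scalar. -/

open scoped Matrix Pointwise

lemma exists_eq_smul_one_of_mulVec_mem_span {R ι : Type*} [CommSemiring R] [Fintype ι]
    [DecidableEq ι] {N : Matrix ι ι R}
    (hsingle : ∀ j, N *ᵥ Pi.single j 1 ∈ R ∙ (Pi.single j 1 : ι → R))
    (hone : N *ᵥ 1 ∈ R ∙ (1 : ι → R)) : ∃ c : R, N = c • 1 := by
  simp only [Submodule.mem_span_singleton] at hsingle hone
  choose d hd using hsingle
  obtain ⟨c, hc⟩ := hone
  have hN : N = Matrix.diagonal d := Matrix.ext_of_mulVec_single fun j => by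
    rw [← hd j, Matrix.diagonal_mulVec_single, ← Pi.single_smul, smul_eq_mul]
  have hcd : d = c • 1 := by
    rw [hc, hN]
    exact funext fun i => by rw [Matrix.mulVec_diagonal, Pi.one_apply, mul_one]
  refine ⟨c, ?_⟩
  rw [hN, hcd, Matrix.diagonal_smul]
  exact congrArg _ Matrix.diagonal_one

section Hyperplanes

variable {R : Type} [CommRing R] {n : ℕ}

/-- The hyperplane with equation `a ⬝ᵥ v = 0`. -/
def hyperplane (a : Fin n → R) : Submodule R (Fin n → R) :=
  LinearMap.ker (dotProductBilin R R a)

lemma mem_hyperplane {a v : Fin n → R} : v ∈ hyperplane a ↔ a ⬝ᵥ v = 0 :=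
  Iff.rfl

lemma span_singleton_le_hyperplane {a v : Fin n → R} :
    R ∙ v ≤ hyperplane a ↔ a ⬝ᵥ v = 0 :=
  Submodule.span_singleton_le_iff_mem v _

lemma dotProduct_eq_add_removeNth (i : Fin (n + 1)) (a v : Fin (n + 1) → R) :
    a ⬝ᵥ v = a i * v i + i.removeNth a ⬝ᵥ i.removeNth v :=
  Fin.sum_univ_succAbove (fun j => a j * v j) i

lemma insertNth_zero_dotProduct (i : Fin (n + 1)) (b : Fin n → R) (v : Fin (n + 1) → R) :
    i.insertNth 0 b ⬝ᵥ v = b ⬝ᵥ i.removeNth v := by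
  simp [dotProduct_eq_add_removeNth i]

/-- Where a coefficient of the equation is a unit, the equation can be solved for that coordinate,
so the remaining coordinates parametrise the hyperplane. -/
lemma isFreeRank_hyperplane {a : Fin (n + 1) → R} {i : Fin (n + 1)} (hi : IsUnit (a i)) :
    IsFreeRank n (hyperplane a) := by
  let drop : hyperplane a →ₗ[R] (Fin n → R) :=
    LinearMap.funLeft R R i.succAbove ∘ₗ (hyperplane a).subtype
  have injective : Function.Injective drop := by
    refine (injective_iff_map_eq_zero drop).2 fun ⟨v, hv⟩ h => Subtype.ext ?_
    replace h : i.removeNth v = 0 := h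
    rw [mem_hyperplane, dotProduct_eq_add_removeNth i, h, dotProduct_zero, add_zero,
      hi.mul_right_eq_zero] at hv
    calc v = i.insertNth (v i) (i.removeNth v) := (Fin.insertNth_self_removeNth i v).symm
      _ = 0 := by rw [hv, h, Fin.insertNth_zero_right, Pi.single_zero]
  have surjective : Function.Surjective drop := by
    intro w
    obtain ⟨c, hc⟩ := hi.exists_right_inv
    refine ⟨⟨i.insertNth (-(c * (i.removeNth a ⬝ᵥ w))) w, ?_⟩, ?_⟩
    · rw [mem_hyperplane, dotProduct_eq_add_removeNth i, Fin.insertNth_apply_same,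
        Fin.removeNth_insertNth]
      linear_combination -(i.removeNth a ⬝ᵥ w) * hc
    · exact Fin.removeNth_insertNth (α := fun _ => R) i _ w
  exact ⟨(LinearEquiv.ofBijective drop ⟨injective, surjective⟩).symm⟩

lemma IsHyperoval.finite {K : Set (Submodule R (Fin 3 → R))} (hK : IsHyperoval K) : K.Finite :=
  Set.finite_of_ncard_ne_zero (by rw [hK.2.1]; decide)

lemma IsHyperoval.not_three_le_hyperplane {K : Set (Submodule R (Fin 3 → R))}
    (hK : IsHyperoval K) {a : Fin 3 → R} {i : Fin 3} (hi : IsUnit (a i))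
    {P Q S : Submodule R (Fin 3 → R)} (hP : P ∈ K) (hQ : Q ∈ K) (hS : S ∈ K)
    (hPQ : P ≠ Q) (hPS : P ≠ S) (hQS : Q ≠ S) :
    ¬ (P ≤ hyperplane a ∧ Q ≤ hyperplane a ∧ S ≤ hyperplane a) := by
  rintro ⟨hPa, hQa, hSa⟩
  have hsub : {P, Q, S} ⊆ {X ∈ K | X ≤ hyperplane a} := by
    rintro X (rfl | rfl | rfl)
    exacts [⟨hP, hPa⟩, ⟨hQ, hQa⟩, ⟨hS, hSa⟩]
  have three_le := Set.ncard_le_ncard hsub (hK.finite.sep _)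
  rw [Set.ncard_eq_three.2 ⟨P, Q, S, hPQ, hPS, hQS, rfl⟩] at three_le
  exact absurd (three_le.trans (hK.2.2 _ (isFreeRank_hyperplane hi))) (by decide)

end Hyperplanes

section ModuloTwo

lemma isUnit_iff_two_mul_ne_zero : ∀ {x : R4}, IsUnit x ↔ 2 * x ≠ 0 := by
  decide

lemma isUnit_iff_eq_one_or_eq_neg_one : ∀ {x : R4}, IsUnit x ↔ x = 1 ∨ x = -1 := by
  decide

lemma red2_eq_red2_iff : ∀ {x y : R4}, red2 x = red2 y ↔ 2 * x = 2 * y := by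
  decide

lemma exists_isUnit_iff_two_smul_ne_zero {ι : Type*} {v : ι → R4} :
    (∃ i, IsUnit (v i)) ↔ (2 : R4) • v ≠ 0 := by
  simp [isUnit_iff_two_mul_ne_zero, funext_iff]

lemma span_two_smul_eq_iff {ι : Type*} {v w : ι → R4} :
    R4 ∙ ((2 : R4) • v) = R4 ∙ ((2 : R4) • w) ↔ (2 : R4) • v = (2 : R4) • w := by
  refine ⟨fun h => ?_, fun h => by rw [h]⟩
  obtain ⟨c, hc⟩ := Submodule.mem_span_singleton.1 (h ▸ Submodule.mem_span_singleton_self _)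
  have mul_two : ∀ c : R4, c * 2 = 0 ∨ c * 2 = 2 := by decide
  rw [smul_smul] at hc
  rcases mul_two c with h0 | h2
  · have hv : (2 : R4) • v = 0 := by rw [← hc, h0, zero_smul]
    rw [hv, Submodule.span_zero_singleton, eq_comm, Submodule.span_singleton_eq_bot] at h
    rw [hv, h]
  · rw [← hc, h2]

/-- Two points are neighbours if they have the same reduction modulo 2. Multiplication by 2
identifies `(ℤ/2ℤ)³` with `2(ℤ/4ℤ)³`, so the submodule `2 • P` stands for the reduction of `P`. -/
def Neighbour (P Q : Submodule R4 (Fin 3 → R4)) : Prop :=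
  (2 : R4) • P = (2 : R4) • Q

lemma neighbour_span_singleton {v w : Fin 3 → R4} :
    Neighbour (R4 ∙ v) (R4 ∙ w) ↔ (2 : R4) • v = (2 : R4) • w := by
  simp only [Neighbour, Submodule.smul_span, Set.smul_set_singleton, span_two_smul_eq_iff]

/-- The reductions modulo 2 of the points form a Fano plane. -/
lemma ncard_two_smul_points_le : ((fun P => (2 : R4) • P) ''
    {P : Submodule R4 (Fin 3 → R4) | IsPoint P}).ncard ≤ 7 := by
  let X : Finset (Fin 3 → R4) := {x | x ≠ 0 ∧ (2 : R4) • x = 0}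
  have hX : X.card = 7 := by decide
  have hsub : (fun P => (2 : R4) • P) '' {P : Submodule R4 (Fin 3 → R4) | IsPoint P} ⊆
      (fun x => R4 ∙ x) '' (X : Set (Fin 3 → R4)) := by
    rintro _ ⟨_, ⟨v, hv, rfl⟩, rfl⟩
    have four : (2 * 2 : R4) = 0 := by decide
    refine ⟨(2 : R4) • v, ?_, ?_⟩
    · simp only [X, Finset.coe_filter_univ, Set.mem_ofPred_eq, smul_smul, four, zero_smul, and_true]
      exact exists_isUnit_iff_two_smul_ne_zero.1 hv
    · simp only [Submodule.smul_span, Set.smul_set_singleton]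
  calc _ ≤ _ := Set.ncard_le_ncard hsub (X.finite_toSet.image _)
    _ ≤ (X : Set (Fin 3 → R4)).ncard := Set.ncard_image_le X.finite_toSet
    _ = 7 := by rw [Set.ncard_coe_finset, hX]

end ModuloTwo

section Action

variable {a : GL3} {P Q L : Submodule R4 (Fin 3 → R4)} {K : Set (Submodule R4 (Fin 3 → R4))}

lemma mapPt_mul (a b : GL3) (P : Submodule R4 (Fin 3 → R4)) :
    mapPt (a * b) P = mapPt a (mapPt b P) := by
  rw [mapPt, Units.val_mul, Matrix.mulVecLin_mul, Submodule.map_comp]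
  rfl

lemma mapPt_one (P : Submodule R4 (Fin 3 → R4)) : mapPt 1 P = P := by
  rw [mapPt, Units.val_one, Matrix.mulVecLin_one, Submodule.map_id]

lemma mapPt_inv_mapPt (a : GL3) (P : Submodule R4 (Fin 3 → R4)) :
    mapPt a⁻¹ (mapPt a P) = P := by
  rw [← mapPt_mul, inv_mul_cancel, mapPt_one]

lemma mapPt_mapPt_inv (a : GL3) (P : Submodule R4 (Fin 3 → R4)) :
    mapPt a (mapPt a⁻¹ P) = P := by
  rw [← mapPt_mul, mul_inv_cancel, mapPt_one]

lemma mapPt_injective (a : GL3) : Function.Injective (mapPt a) :=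
  Function.LeftInverse.injective (mapPt_inv_mapPt a)

lemma mapPt_le_iff : mapPt a P ≤ L ↔ P ≤ mapPt a⁻¹ L := by
  constructor <;> intro h
  · rw [← mapPt_inv_mapPt a P]
    exact Submodule.map_mono h
  · rw [← mapPt_mapPt_inv a L]
    exact Submodule.map_mono h

lemma mulVec_injective (a : GL3) : Function.Injective a.1.mulVec :=
  Matrix.mulVec_injective_of_isUnit a.isUnit

lemma mapPt_span_singleton (a : GL3) (v : Fin 3 → R4) :
    mapPt a (R4 ∙ v) = R4 ∙ (a.1 *ᵥ v) := by
  rw [mapPt, Submodule.map_span, Set.image_singleton, Matrix.mulVecLin_apply]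

lemma isPoint_mapPt (hP : IsPoint P) (a : GL3) : IsPoint (mapPt a P) := by
  obtain ⟨v, hv, rfl⟩ := hP
  refine ⟨_, ?_, mapPt_span_singleton a v⟩
  rw [exists_isUnit_iff_two_smul_ne_zero] at hv ⊢
  rw [← Matrix.mulVec_smul]
  exact fun h => hv (mulVec_injective a (h.trans (Matrix.mulVec_zero _).symm))

lemma isFreeRank_mapPt {k : ℕ} (hL : IsFreeRank k L) (a : GL3) : IsFreeRank k (mapPt a L) :=
  hL.map fun e => e.trans (Submodule.equivMapOfInjective _ (mulVec_injective a) L)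

lemma IsHyperoval.image_mapPt (hK : IsHyperoval K) (a : GL3) : IsHyperoval (mapPt a '' K) := by
  refine ⟨?_, ?_, fun L hL => ?_⟩
  · rintro _ ⟨P, hP, rfl⟩
    exact isPoint_mapPt (hK.1 P hP) a
  · rw [Set.ncard_image_of_injective _ (mapPt_injective a), hK.2.1]
  · have hsecant : {P ∈ mapPt a '' K | P ≤ L} = mapPt a '' {P ∈ K | P ≤ mapPt a⁻¹ L} := by
      ext Q
      constructor
      · rintro ⟨⟨P, hP, rfl⟩, hle⟩
        exact ⟨P, ⟨hP, mapPt_le_iff.1 hle⟩, rfl⟩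
      · rintro ⟨P, ⟨hP, hle⟩, rfl⟩
        exact ⟨⟨P, hP, rfl⟩, mapPt_le_iff.2 hle⟩
    rw [hsecant, Set.ncard_image_of_injective _ (mapPt_injective a)]
    exact hK.2.2 _ (isFreeRank_mapPt hL a⁻¹)

lemma neighbour_mapPt (h : Neighbour P Q) (a : GL3) : Neighbour (mapPt a P) (mapPt a Q) := by
  have map_two_smul (S : Submodule R4 (Fin 3 → R4)) :
      mapPt a ((2 : R4) • S) = (2 : R4) • mapPt a S :=
    Submodule.map_pointwise_smul _ _ _
  rw [Neighbour, ← map_two_smul, ← map_two_smul, h]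

/-- Replacing the `i`-th column of the identity by a vector spanning `P` whose `i`-th coordinate
is a unit gives an invertible matrix. -/
lemma IsPoint.exists_mapPt_span_single_eq (hP : IsPoint P) :
    ∃ (a : GL3) (i : Fin 3), mapPt a (R4 ∙ Pi.single i 1) = P := by
  obtain ⟨v, ⟨i, hi⟩, rfl⟩ := hP
  have hdet : ((1 : Matrix (Fin 3) (Fin 3) R4).updateCol i v).det = v i := by
    rw [← Matrix.cramer_apply, Matrix.cramer_one, Module.End.one_apply]
  refine ⟨Matrix.GeneralLinearGroup.mk'' _ (hdet ▸ hi), i, ?_⟩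
  rw [mapPt_span_singleton, Matrix.mulVec_single_one]
  congr
  funext j
  exact Matrix.updateCol_self

end Action

section Pencil

variable {P Q : Submodule R4 (Fin 3 → R4)} {i : Fin 3} {K : Set (Submodule R4 (Fin 3 → R4))}

/-- Coefficient vectors of the lines through the point spanned by the `i`-th unit vector: each of
these six lines has an equation `b ⬝ᵥ i.removeNth v = 0`, with `b` unique up to sign and having a
unit entry, that is, with `2 • b ≠ 0`. -/
def pencil : Finset (Fin 2 → R4) := {b | (2 : R4) • b ≠ 0}

open Classical in
/-- The members of the pencil through the `i`-th unit vector whose lines also pass through `P`. -/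
noncomputable def pencilThrough (i : Fin 3) (P : Submodule R4 (Fin 3 → R4)) :
    Finset (Fin 2 → R4) :=
  {b ∈ pencil | P ≤ hyperplane (i.insertNth 0 b)}

lemma mem_pencilThrough {b : Fin 2 → R4} :
    b ∈ pencilThrough i P ↔ b ∈ pencil ∧ P ≤ hyperplane (i.insertNth 0 b) := by
  classical exact Finset.mem_filter

lemma pencilThrough_span_singleton (i : Fin 3) (w : Fin 3 → R4) :
    pencilThrough i (R4 ∙ w) = {b ∈ pencil | b ⬝ᵥ i.removeNth w = 0} := by
  ext b
  rw [mem_pencilThrough, Finset.mem_filter, span_singleton_le_hyperplane,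
    insertNth_zero_dotProduct]

lemma card_pencil : pencil.card = 12 := by
  decide

lemma two_le_card_pencilThrough (i : Fin 3) (hP : IsPoint P) :
    2 ≤ (pencilThrough i P).card := by
  obtain ⟨w, -, rfl⟩ := hP
  have two_le : ∀ x : Fin 2 → R4, 2 ≤ Finset.card {b ∈ pencil | b ⬝ᵥ x = 0} := by decide
  rw [pencilThrough_span_singleton]
  exact two_le _

lemma four_le_card_pencilThrough (hP : IsPoint P) (h : Neighbour P (R4 ∙ Pi.single i 1)) :
    4 ≤ (pencilThrough i P).card := by
  obtain ⟨w, -, rfl⟩ := hP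
  have four_le : ∀ x : Fin 2 → R4, (2 : R4) • x = 0 →
      4 ≤ Finset.card {b ∈ pencil | b ⬝ᵥ x = 0} := by decide
  rw [pencilThrough_span_singleton]
  refine four_le _ (funext fun j => ?_)
  simpa [Fin.removeNth] using congrFun (neighbour_span_singleton.1 h) (i.succAbove j)

lemma IsHyperoval.disjoint_pencilThrough (hK : IsHyperoval K)
    (hi : R4 ∙ Pi.single i 1 ∈ K) (hP : P ∈ K) (hQ : Q ∈ K)
    (hPi : P ≠ R4 ∙ Pi.single i 1) (hQi : Q ≠ R4 ∙ Pi.single i 1)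
    (hPQ : P ≠ Q) : Disjoint (pencilThrough i P) (pencilThrough i Q) := by
  refine Finset.disjoint_left.2 fun b hbP hbQ => ?_
  rw [mem_pencilThrough] at hbP hbQ
  obtain ⟨j, hj⟩ := exists_isUnit_iff_two_smul_ne_zero.2 (Finset.mem_filter.1 hbP.1).2
  refine hK.not_three_le_hyperplane (i := i.succAbove j) (a := i.insertNth 0 b) ?_ hi hP hQ
    hPi.symm hQi.symm hPQ ⟨?_, hbP.2, hbQ.2⟩
  · rwa [Fin.insertNth_apply_succAbove]
  · rw [span_singleton_le_hyperplane, dotProduct_single_one, Fin.insertNth_apply_same]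

/-- The six remaining points need disjoint sets of lines through the given one. There are only six
such lines, and two of them pass through a neighbour. -/
lemma IsHyperoval.not_neighbour_span_single (hK : IsHyperoval K)
    (hi : R4 ∙ Pi.single i 1 ∈ K) (hP : P ∈ K) (hPi : P ≠ R4 ∙ Pi.single i 1) :
    ¬ Neighbour P (R4 ∙ Pi.single i 1) := by
  classical
  intro hneighbour
  let T : Finset (Submodule R4 (Fin 3 → R4)) :=
    hK.finite.toFinset.erase (R4 ∙ Pi.single i 1)
  have mem_T {Q} : Q ∈ T ↔ Q ≠ R4 ∙ Pi.single i 1 ∧ Q ∈ K := by simp [T]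
  have card_T : T.card = 6 := by
    rw [Finset.card_erase_of_mem (by simpa using hi), ← Set.ncard_eq_toFinset_card, hK.2.1]
  have hPT : P ∈ T := mem_T.2 ⟨hPi, hP⟩
  have upper : ∑ Q ∈ T, (pencilThrough i Q).card ≤ 12 := by
    rw [← Finset.card_biUnion fun Q hQ S hS => hK.disjoint_pencilThrough hi (mem_T.1 hQ).2
      (mem_T.1 hS).2 (mem_T.1 hQ).1 (mem_T.1 hS).1, ← card_pencil]
    exact Finset.card_le_card
      (Finset.biUnion_subset.2 fun Q _ b hb => (mem_pencilThrough.1 hb).1)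
  have lower : (T.erase P).card • 2 ≤ ∑ Q ∈ T.erase P, (pencilThrough i Q).card :=
    Finset.card_nsmul_le_sum _ _ _ fun Q hQ =>
      two_le_card_pencilThrough i (hK.1 Q (mem_T.1 (Finset.mem_of_mem_erase hQ)).2)
  have four_le := four_le_card_pencilThrough (hK.1 P hP) hneighbour
  rw [Finset.card_erase_of_mem hPT, card_T, smul_eq_mul] at lower
  rw [← Finset.add_sum_erase T _ hPT] at upper
  omega

lemma IsHyperoval.eq_of_neighbour (hK : IsHyperoval K) (hP : P ∈ K) (hQ : Q ∈ K)
    (h : Neighbour P Q) : P = Q := by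
  obtain ⟨a, i, rfl⟩ := (hK.1 Q hQ).exists_mapPt_span_single_eq
  have hi := Set.mem_image_of_mem (mapPt a⁻¹) hQ
  have h' := neighbour_mapPt h a⁻¹
  rw [mapPt_inv_mapPt] at hi h'
  by_contra hne
  refine (hK.image_mapPt a⁻¹).not_neighbour_span_single hi (Set.mem_image_of_mem _ hP) ?_ h'
  rwa [← mapPt_inv_mapPt a (R4 ∙ Pi.single i 1), (mapPt_injective _).ne_iff]

/-- Seven points, no two of them neighbours, meet all seven neighbour classes. -/
lemma IsHyperoval.exists_neighbour (hK : IsHyperoval K) (hP : IsPoint P) :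
    ∃ Q ∈ K, Neighbour Q P := by
  have hinj : Set.InjOn (fun Q => (2 : R4) • Q) K :=
    fun Q hQ S hS h => hK.eq_of_neighbour hQ hS h
  have hfin : ((fun Q => (2 : R4) • Q) ''
      {Q : Submodule R4 (Fin 3 → R4) | IsPoint Q}).Finite := Set.toFinite _
  have himage : (fun Q => (2 : R4) • Q) '' K = (fun Q => (2 : R4) • Q) '' {Q | IsPoint Q} :=
    Set.eq_of_subset_of_ncard_le (Set.image_mono hK.1)
      (ncard_two_smul_points_le.trans (by rw [hinj.ncard_image, hK.2.1])) hfin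
  exact himage.symm.subset (Set.mem_image_of_mem _ hP)

end Pencil

section Frame

variable {K : Set (Submodule R4 (Fin 3 → R4))}

/-- The points spanned by the unit vectors and by the all-ones vector. -/
def standardFrame : Set (Submodule R4 (Fin 3 → R4)) :=
  insert (R4 ∙ 1) (Set.range fun i => R4 ∙ Pi.single i 1)

lemma standardFrame_subset_iff :
    standardFrame ⊆ K ↔ R4 ∙ 1 ∈ K ∧ ∀ i, R4 ∙ Pi.single i 1 ∈ K := by
  rw [standardFrame, Set.insert_subset_iff, Set.range_subset_iff]

/-- The standard frame with the three points that lie on none of the six lines joining two of its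
points; it is the base point for the action on hyperovals. -/
def standardHyperoval : Set (Submodule R4 (Fin 3 → R4)) :=
  standardFrame ∪ {R4 ∙ ![2, 1, 3], R4 ∙ ![1, 2, 3], R4 ∙ ![1, 3, 2]}

lemma finite_standardHyperoval : standardHyperoval.Finite :=
  Set.toFinite _

lemma ncard_standardHyperoval_le : standardHyperoval.ncard ≤ 7 := by
  have hframe : standardFrame.ncard ≤ 3 + 1 := by
    refine (Set.ncard_insert_le _ _).trans (Nat.add_le_add_right ?_ 1)
    rw [← Set.image_univ]
    exact (Set.ncard_image_le Set.finite_univ).trans (by simp [Set.ncard_univ])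
  refine (Set.ncard_union_le _ _).trans (Nat.add_le_add (d := 3) hframe ?_)
  refine (Set.ncard_insert_le _ _).trans (Nat.add_le_add_right (m := 2) ?_ 1)
  refine (Set.ncard_insert_le _ _).trans (Nat.add_le_add_right (m := 1) ?_ 1)
  exact (Set.ncard_singleton _).le

lemma span_single_injective :
    Function.Injective fun i : Fin 3 => R4 ∙ (Pi.single i 1 : Fin 3 → R4) := by
  intro i j h
  have reductions_ne : ∀ i j : Fin 3,
      (2 : R4) • (Pi.single i 1 : Fin 3 → R4) = (2 : R4) • Pi.single j 1 → i = j := by decide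
  exact reductions_ne i j (neighbour_span_singleton.1 (congrArg (fun P => (2 : R4) • P) h))

lemma span_single_ne_span_one (i : Fin 3) :
    R4 ∙ (Pi.single i 1 : Fin 3 → R4) ≠ R4 ∙ (1 : Fin 3 → R4) := by
  intro h
  have reductions_ne : ∀ i : Fin 3,
      (2 : R4) • (Pi.single i 1 : Fin 3 → R4) ≠ (2 : R4) • 1 := by decide
  exact reductions_ne i (neighbour_span_singleton.1 (congrArg (fun P => (2 : R4) • P) h))

/-- The lines `x i = 0` and `x i = x j` contain two frame points each. -/
lemma IsHyperoval.ne_zero_and_injective (hK : IsHyperoval K) (hframe : standardFrame ⊆ K)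
    {v : Fin 3 → R4} (hv : R4 ∙ v ∈ K) (hoff : R4 ∙ v ∉ standardFrame) :
    (∀ i, v i ≠ 0) ∧ Function.Injective v := by
  obtain ⟨one_mem, single_mem⟩ := standardFrame_subset_iff.1 hframe
  obtain ⟨one_mem', single_mem'⟩ := standardFrame_subset_iff.1 subset_rfl
  have ne_one : R4 ∙ v ≠ R4 ∙ 1 := fun h => hoff (h ▸ one_mem')
  have ne_single (i : Fin 3) : R4 ∙ v ≠ R4 ∙ Pi.single i 1 := fun h => hoff (h ▸ single_mem' i)
  constructor
  · intro i hvi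
    have others_ne : ∀ i : Fin 3, i + 1 ≠ i + 2 ∧ i + 1 ≠ i ∧ i + 2 ≠ i := by decide
    obtain ⟨h12, h1, h2⟩ := others_ne i
    refine hK.not_three_le_hyperplane (a := Pi.single i 1) (i := i) (by simp) hv
      (single_mem (i + 1)) (single_mem (i + 2)) (ne_single _) (ne_single _)
      (span_single_injective.ne h12) ?_
    simp [mem_hyperplane, hvi, h1, h2]
  · intro i j hvij
    by_contra hij
    have exists_third : ∀ i j : Fin 3, ∃ k, k ≠ i ∧ k ≠ j := by decide
    obtain ⟨k, hi, hj⟩ := exists_third i j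
    refine hK.not_three_le_hyperplane (a := Pi.single i 1 - Pi.single j 1) (i := i)
      (by simp [hij]) hv (single_mem k) one_mem (ne_single _) ne_one
      (span_single_ne_span_one _) ?_
    simp [mem_hyperplane, sub_dotProduct, hvij, hi, hj]

lemma span_mem_of_ne_zero_of_injective {v : Fin 3 → R4} (hv : ∀ i, v i ≠ 0)
    (hinj : Function.Injective v) :
    R4 ∙ v ∈ ({R4 ∙ ![2, 1, 3], R4 ∙ ![1, 2, 3], R4 ∙ ![1, 3, 2]} :
      Set (Submodule R4 (Fin 3 → R4))) := by
  have permutations : ∀ v : Fin 3 → R4, (∀ i, v i ≠ 0) → Function.Injective v →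
      ∃ w, (w = ![2, 1, 3] ∨ w = ![1, 2, 3] ∨ w = ![1, 3, 2]) ∧ (v = w ∨ v = -w) := by decide
  obtain ⟨w, hw, hvw⟩ := permutations v hv hinj
  have hspan : R4 ∙ v = R4 ∙ w := by
    rcases hvw with rfl | rfl
    · rfl
    · rw [← Set.neg_singleton, Submodule.span_neg]
  rw [hspan]
  rcases hw with rfl | rfl | rfl <;> simp

lemma IsHyperoval.eq_standardHyperoval (hK : IsHyperoval K) (hframe : standardFrame ⊆ K) :
    K = standardHyperoval := by
  have hsub : K ⊆ standardHyperoval := by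
    intro P hP
    by_cases hPframe : P ∈ standardFrame
    · exact Or.inl hPframe
    · obtain ⟨v, -, rfl⟩ := hK.1 P hP
      obtain ⟨hv, hinj⟩ := hK.ne_zero_and_injective hframe hP hPframe
      exact Or.inr (span_mem_of_ne_zero_of_injective hv hinj)
  exact Set.eq_of_subset_of_ncard_le hsub (hK.2.1 ▸ ncard_standardHyperoval_le)
    finite_standardHyperoval

end Frame

section CongruenceKernel

variable {a : GL3} {K : Set (Submodule R4 (Fin 3 → R4))}

lemma mul_self_eq_one_of_two_smul_eq {ι : Type*} [Fintype ι] [DecidableEq ι]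
    {N : Matrix ι ι R4} (hN : (2 : R4) • N = (2 : R4) • 1) : N * N = 1 := by
  have even : ∀ x : R4, 2 * x = 0 → ∃ y, x = 2 * y := by decide
  have hsub : (2 : R4) • (N - 1) = 0 := by rw [smul_sub, hN, sub_self]
  choose M hM using fun i j => even ((N - 1) i j) (congrFun (congrFun hsub i) j)
  have hNM : N = 1 + (2 : R4) • Matrix.of M := by
    rw [← sub_eq_iff_eq_add']
    exact Matrix.ext hM
  have four : (2 * 2 : R4) = 0 := by decide
  calc N * N = 1 + (2 * 2 : R4) • (Matrix.of M + Matrix.of M * Matrix.of M) := by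
        rw [hNM, add_mul, mul_add, mul_add, smul_mul_smul_comm, one_mul, mul_one, one_mul]
        module
    _ = 1 := by rw [four, zero_smul, add_zero]

lemma mem_ker_redGL_iff :
    a ∈ redGL.ker ↔ (2 : R4) • a.1 = (2 : R4) • (1 : Matrix (Fin 3) (Fin 3) R4) := by
  rw [MonoidHom.mem_ker, Units.ext_iff, ← map_one redGL, ← Matrix.ext_iff, ← Matrix.ext_iff]
  exact forall₂_congr fun i j => red2_eq_red2_iff

lemma exists_mem_ker_redGL {N : Matrix (Fin 3) (Fin 3) R4} (hN : (2 : R4) • N = (2 : R4) • 1) :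
    ∃ a ∈ redGL.ker, a.1 = N :=
  have hNN := mul_self_eq_one_of_two_smul_eq hN
  ⟨⟨N, N, hNN, hNN⟩, mem_ker_redGL_iff.2 hN, rfl⟩

lemma neighbour_mapPt_self (ha : a ∈ redGL.ker) (P : Submodule R4 (Fin 3 → R4)) :
    Neighbour (mapPt a P) P := by
  have hcomp : DistribSMul.toLinearMap R4 (Fin 3 → R4) (2 : R4) ∘ₗ a.1.mulVecLin =
      DistribSMul.toLinearMap R4 (Fin 3 → R4) (2 : R4) := by
    refine LinearMap.ext fun v => ?_
    change (2 : R4) • a.1 *ᵥ v = (2 : R4) • v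
    rw [← Matrix.smul_mulVec, mem_ker_redGL_iff.1 ha, Matrix.smul_mulVec, Matrix.one_mulVec]
  rw [Neighbour, Submodule.pointwise_smul_def, mapPt, ← Submodule.map_comp, hcomp]
  rfl

lemma IsHyperoval.exists_span_singleton_mem (hK : IsHyperoval K) {v : Fin 3 → R4}
    (hv : ∃ i, IsUnit (v i)) : ∃ u, (2 : R4) • u = (2 : R4) • v ∧ R4 ∙ u ∈ K := by
  obtain ⟨Q, hQ, hneighbour⟩ := hK.exists_neighbour ⟨v, hv, rfl⟩
  obtain ⟨u, -, rfl⟩ := hK.1 Q hQ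
  exact ⟨u, neighbour_span_singleton.1 hneighbour, hQ⟩

/-- The frame points of `K` are spanned by the columns of a matrix `B ≡ 1` and by a vector `w ≡ 1`.
Rescaling the columns by the coordinates of `B⁻¹ w` makes their sum equal to `w`. -/
lemma IsHyperoval.exists_image_standardFrame_subset (hK : IsHyperoval K) :
    ∃ a ∈ redGL.ker, mapPt a '' standardFrame ⊆ K := by
  choose u hu hu_mem using fun j =>
    hK.exists_span_singleton_mem (v := Pi.single j 1) ⟨j, by simp⟩
  obtain ⟨w, hw, hw_mem⟩ := hK.exists_span_singleton_mem (v := 1) ⟨0, isUnit_one⟩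
  let B : Matrix (Fin 3) (Fin 3) R4 := Matrix.of fun i j => u j i
  have hB : (2 : R4) • B = (2 : R4) • 1 := by
    ext i j
    simpa [B, Matrix.one_apply, Pi.single_apply] using congrFun (hu j) i
  let c := B *ᵥ w
  have hBc : B *ᵥ c = w := by
    rw [Matrix.mulVec_mulVec, mul_self_eq_one_of_two_smul_eq hB, Matrix.one_mulVec]
  have hc : (2 : R4) • c = (2 : R4) • 1 := by
    rw [← Matrix.smul_mulVec, hB, Matrix.smul_mulVec, Matrix.one_mulVec, hw]
  have hc_unit (j : Fin 3) : IsUnit (c j) := by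
    have hcj : 2 * c j = 2 * 1 := congrFun hc j
    exact isUnit_iff_two_mul_ne_zero.2 (hcj ▸ by decide)
  have hN : (2 : R4) • (B * Matrix.diagonal c) = (2 : R4) • 1 := by
    rw [← Matrix.smul_mul, hB, Matrix.smul_mul, one_mul, ← Matrix.diagonal_smul, hc,
      Matrix.diagonal_smul]
    exact congrArg _ Matrix.diagonal_one
  obtain ⟨a, ha, haN⟩ := exists_mem_ker_redGL hN
  refine ⟨a, ha, ?_⟩
  rw [Set.image_subset_iff, standardFrame_subset_iff]
  simp only [Set.mem_preimage, mapPt_span_singleton, haN, ← Matrix.mulVec_mulVec]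
  constructor
  · have : Matrix.diagonal c *ᵥ 1 = c :=
      funext fun i => by rw [Matrix.mulVec_diagonal, Pi.one_apply, mul_one]
    rwa [this, hBc]
  · intro j
    have : B *ᵥ Matrix.diagonal c *ᵥ Pi.single j 1 = c j • u j := by
      rw [Matrix.diagonal_mulVec_single, mul_one, Matrix.mulVec_single, op_smul_eq_smul]
      rfl
    rw [this, Submodule.span_singleton_smul_eq (hc_unit j)]
    exact hu_mem j

lemma IsHyperoval.exists_image_standardHyperoval (hK : IsHyperoval K) :
    ∃ a ∈ redGL.ker, mapPt a '' standardHyperoval = K := by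
  obtain ⟨a, ha, hframe⟩ := hK.exists_image_standardFrame_subset
  refine ⟨a, ha, ?_⟩
  rw [← (hK.image_mapPt a⁻¹).eq_standardHyperoval, ← Set.image_comp]
  · simp [mapPt_mapPt_inv]
  · intro P hP
    exact ⟨_, hframe (Set.mem_image_of_mem _ hP), mapPt_inv_mapPt a P⟩

lemma mem_pmOne_of_forall_mapPt_eq (h : ∀ P ∈ standardFrame, mapPt a P = P) : a ∈ pmOne := by
  obtain ⟨one_mem, single_mem⟩ := standardFrame_subset_iff.1 subset_rfl
  have mulVec_mem {v : Fin 3 → R4} (hv : R4 ∙ v ∈ standardFrame) : a.1 *ᵥ v ∈ R4 ∙ v := by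
    rw [← Submodule.span_singleton_le_iff_mem, ← mapPt_span_singleton, h _ hv]
  obtain ⟨c, hc⟩ := exists_eq_smul_one_of_mulVec_mem_span
    (fun j => mulVec_mem (single_mem j)) (mulVec_mem one_mem)
  have hc_unit : IsUnit c := by
    have hdet := (Matrix.isUnit_iff_isUnit_det a.1).1 a.isUnit
    rwa [hc, Matrix.det_smul, Matrix.det_one, mul_one, Fintype.card_fin,
      isUnit_pow_iff three_ne_zero] at hdet
  rcases isUnit_iff_eq_one_or_eq_neg_one.1 hc_unit with rfl | rfl
  · exact Or.inl (Units.ext (by rw [hc, one_smul, Units.val_one]))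
  · exact Or.inr (Units.ext (by rw [hc, neg_one_smul, Units.val_neg, Units.val_one]))

/-- An element of the kernel moves each point to a neighbour, so it fixes the points of `K`; the
conjugate by a matrix taking the standard frame into `K` then fixes the frame. -/
lemma IsHyperoval.mem_pmOne_of_image_eq (hK : IsHyperoval K) (ha : a ∈ redGL.ker)
    (hfix : mapPt a '' K = K) : a ∈ pmOne := by
  have fixes (P) (hP : P ∈ K) : mapPt a P = P :=
    hK.eq_of_neighbour (hfix.subset (Set.mem_image_of_mem _ hP)) hP (neighbour_mapPt_self ha P)
  obtain ⟨b, -, hframe⟩ := hK.exists_image_standardFrame_subset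
  have hconj : b⁻¹ * a * b ∈ pmOne := mem_pmOne_of_forall_mapPt_eq fun P hP => by
    rw [mapPt_mul, mapPt_mul, fixes _ (hframe (Set.mem_image_of_mem _ hP)), mapPt_inv_mapPt]
  simpa [mul_assoc] using Subgroup.Normal.conj_mem inferInstance _ hconj b

lemma card_ker_redGL : Nat.card redGL.ker = 512 := by
  let e : redGL.ker ≃ {N : Matrix (Fin 3) (Fin 3) R4 // (2 : R4) • N = (2 : R4) • 1} :=
    Equiv.ofBijective (fun a => ⟨a.1.1, mem_ker_redGL_iff.1 a.2⟩)
      ⟨fun a b h => Subtype.ext (Units.ext (congrArg Subtype.val h)), fun ⟨N, hN⟩ =>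
        let ⟨a, ha, haN⟩ := exists_mem_ker_redGL hN
        ⟨⟨a, ha⟩, Subtype.ext haN⟩⟩
  let entries : {N : Matrix (Fin 3) (Fin 3) R4 // (2 : R4) • N = (2 : R4) • 1} ≃
      ∀ i j, {x : R4 // 2 * x = 2 * (1 : Matrix (Fin 3) (Fin 3) R4) i j} :=
    (Equiv.subtypeEquivRight fun N => by
      simp only [← Matrix.ext_iff, Matrix.smul_apply, smul_eq_mul]).trans
    (Equiv.subtypePiEquivPi.trans (Equiv.piCongrRight fun i => Equiv.subtypePiEquivPi))
  have card_entry (y : R4) : Nat.card {x : R4 // 2 * x = 2 * y} = 2 := by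
    rw [Nat.card_eq_fintype_card]
    decide +revert
  rw [Nat.card_congr (e.trans entries)]
  simp only [Nat.card_pi, card_entry, Finset.prod_const, Finset.card_univ, Fintype.card_fin]
  norm_num

lemma card_pmOne : Nat.card pmOne = 2 := by
  have hne : (1 : GL3) ≠ -1 := fun h =>
    absurd (congrArg (fun a : GL3 => a.1 0 0) h) (by decide)
  exact Set.ncard_pair hne

lemma pmOne_le_ker_redGL : pmOne ≤ redGL.ker := by
  rintro a (rfl | rfl)
  · exact one_mem _
  · have neg_two : (-2 : R4) = 2 := by decide
    rw [mem_ker_redGL_iff, Units.val_neg, Units.val_one, smul_neg, ← neg_smul, neg_two]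

end CongruenceKernel

section ProjectiveGroup

variable {g : PGL3} {K : Set (Submodule R4 (Fin 3 → R4))}

lemma pglMapSet_mk (a : GL3) (K : Set (Submodule R4 (Fin 3 → R4))) :
    pglMapSet (QuotientGroup.mk' pmOne a) K = mapPt a '' K :=
  rfl

lemma pglMapSet_mul (g h : PGL3) (K : Set (Submodule R4 (Fin 3 → R4))) :
    pglMapSet (g * h) K = pglMapSet g (pglMapSet h K) := by
  obtain ⟨a, rfl⟩ := QuotientGroup.mk'_surjective pmOne g
  obtain ⟨b, rfl⟩ := QuotientGroup.mk'_surjective pmOne h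
  rw [← map_mul, pglMapSet_mk, pglMapSet_mk, pglMapSet_mk, Set.image_image]
  simp only [mapPt_mul]

lemma Hsub_normal : Hsub.Normal :=
  Subgroup.Normal.map inferInstance _ (QuotientGroup.mk'_surjective pmOne)

lemma card_Hsub : Nat.card Hsub = 256 := by
  have hcard := Subgroup.relIndex_mul_relIndex ⊥ pmOne redGL.ker bot_le pmOne_le_ker_redGL
  have hrel : pmOne.relIndex redGL.ker = Nat.card Hsub := by
    rw [Hsub, ← Subgroup.relIndex_ker, QuotientGroup.ker_mk']
  rw [Subgroup.relIndex_bot_left, Subgroup.relIndex_bot_left, hrel, card_pmOne,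
    card_ker_redGL] at hcard
  omega

lemma IsHyperoval.exists_pglMapSet_standardHyperoval (hK : IsHyperoval K) :
    ∃ g ∈ Hsub, pglMapSet g standardHyperoval = K :=
  let ⟨_, ha, haK⟩ := hK.exists_image_standardHyperoval
  ⟨_, Subgroup.mem_map_of_mem _ ha, haK⟩

lemma IsHyperoval.eq_one_of_pglMapSet_eq (hK : IsHyperoval K) (hg : g ∈ Hsub)
    (hfix : pglMapSet g K = K) : g = 1 := by
  obtain ⟨a, ha, rfl⟩ := hg
  exact (QuotientGroup.eq_one_iff a).2 (hK.mem_pmOne_of_image_eq ha hfix)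

end ProjectiveGroup

/-- `Hsub` is a normal subgroup of PGL(3, ℤ/4ℤ) of order 256 which acts simply
transitively (regularly) on the set of hyperovals of PHG(2, ℤ/4ℤ). -/
theorem Hsub_normal_card_regular :
    Hsub.Normal ∧ Nat.card Hsub = 256 ∧
    ∀ H₁ H₂ : Set (Submodule R4 (Fin 3 → R4)), IsHyperoval H₁ → IsHyperoval H₂ →
      ∃! g : PGL3, g ∈ Hsub ∧ pglMapSet g H₁ = H₂ := by
  refine ⟨Hsub_normal, card_Hsub, fun H₁ H₂ h₁ h₂ => ?_⟩
  obtain ⟨g₁, hg₁, rfl⟩ := h₁.exists_pglMapSet_standardHyperoval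
  obtain ⟨g₂, hg₂, rfl⟩ := h₂.exists_pglMapSet_standardHyperoval
  refine ⟨g₂ * g₁⁻¹, ⟨mul_mem hg₂ (inv_mem hg₁), ?_⟩, ?_⟩
  · rw [← pglMapSet_mul, inv_mul_cancel_right]
  · rintro g ⟨hg, hgH⟩
    have hfix : pglMapSet (g₁ * g₂⁻¹ * g) (pglMapSet g₁ standardHyperoval) =
        pglMapSet g₁ standardHyperoval := by
      rw [pglMapSet_mul, hgH, ← pglMapSet_mul, inv_mul_cancel_right]
    have hone := h₁.eq_one_of_pglMapSet_eq (mul_mem (mul_mem hg₁ (inv_mem hg₂)) hg) hfix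
    simpa [mul_inv_rev] using eq_inv_of_mul_eq_one_right hone
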